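/- arXiv:1207.3553 — 7 statements merged into one kernel-verified Lean document; each statement's English description precedes it below -/
import Mathlib

section
/- (Anti-calculus proposition, maximum case) Let R > 0 and let f be analytic on an open set containing the closed disk D̄(0;R) = {z : |z| ≤ R}, with f non-constant on that open connected neighborhood. Suppose α ∈ ℂ with |α| = R is a point of maximum of |f| over D̄(0;R), i.e., |f(z)| ≤ |f(α)| for all z with |z| ≤ R. Then f'(α) ≠ 0. -/
/-!
For a functional `ℓ` of norm at most one with `ℓ (f α) = ‖f α‖`, the function `p = ‖f α‖ - ℓ ∘ f`
has nonnegative real part on the disk and vanishes at the boundary point `α`. By Harnack's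
inequality `‖p‖` decays at most linearly along the radius to `α`, so a vanishing derivative at `α`
forces `p` to vanish at the centre. There `‖f‖` then reaches its maximum, which the maximum modulus
principle forbids unless `f` is constant.
-/

section AntiCalculus

open Metric Set Filter
open scoped Topology

theorem not_exists_eqOn_const_of_mem_nhds {𝕜 V W : Type*} [NontriviallyNormedField 𝕜]
    [NormedAddCommGroup V] [NormedSpace 𝕜 V] [NormedAddCommGroup W] [NormedSpace 𝕜 W]
    {f : V → W} {Ω U : Set V} {x : V} (hf : AnalyticOnNhd 𝕜 f Ω) (hΩ : IsPreconnected Ω)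
    (hnc : ¬ ∃ y, ∀ z ∈ Ω, f z = y) (hx : x ∈ Ω) (hU : U ∈ 𝓝 x) :
    ¬ ∃ y, ∀ z ∈ U, f z = y :=
  fun ⟨y, hy⟩ ↦ hnc ⟨y, hf.eqOn_of_preconnected_of_eventuallyEq analyticOnNhd_const hΩ hx
    (eventually_of_mem hU hy)⟩

variable {p : ℂ → ℂ} {c z α : ℂ} {R : ℝ}

theorem harnack_norm_le_norm_center (hp : DifferentiableOn ℂ p (ball c R))
    (hre : ∀ w ∈ ball c R, 0 ≤ (p w).re) (hz : z ∈ ball c R) :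
    (R - dist z c) * ‖p z‖ ≤ (R + dist z c) * ‖p c‖ := by
  have hzR : 0 < R - dist z c := sub_pos.mpr hz
  have hR : 0 < R := pos_of_mem_ball hz
  have shift_mem {w : ℂ} (hw : w ∈ ball (0 : ℂ) R) : c + w ∈ ball c R := by simpa using hw
  have borel_caratheodory (M : ℝ) (hM : M ∈ Ioi 0) :
      (R - dist z c) * ‖p z‖ ≤ 2 * M * dist z c + (R + dist z c) * ‖p c‖ := by
    have h := Complex.borelCaratheodory (f := fun w ↦ -p (c + w)) (z := z - c) hM
      ((hp.comp (differentiableOn_id.const_add c) fun _ ↦ shift_mem).neg)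
      (fun w hw ↦ by
        simpa using (neg_nonpos.mpr (hre _ (shift_mem hw))).trans (le_of_lt hM))
      hR (by simpa [dist_eq_norm] using hz)
    simp only [add_sub_cancel, add_zero, norm_neg, ← dist_eq_norm, ← add_div] at h
    rw [le_div_iff₀ hzR] at h
    linarith
  have h := ContinuousWithinAt.closure_le (x := 0) (by simp [closure_Ioi]) (by fun_prop)
    (by fun_prop) borel_caratheodory
  simpa using h

theorem harnack_norm_center_le_norm (hp : DifferentiableOn ℂ p (ball c R))
    (hre : ∀ w ∈ ball c R, 0 ≤ (p w).re) (hz : z ∈ ball c R) :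
    (R - dist z c) * ‖p c‖ ≤ (R + dist z c) * ‖p z‖ := by
  have hc : c ∈ ball c R := mem_ball_self (pos_of_mem_ball hz)
  -- Translating `p` by `ε > 0` makes it invertible, and `p⁻¹` has nonnegative real part as well.
  have translated (ε : ℝ) (hε : ε ∈ Ioi 0) :
      (R - dist z c) * ‖p c + ε‖ ≤ (R + dist z c) * ‖p z + ε‖ := by
    have hre_pos {w : ℂ} (hw : w ∈ ball c R) : 0 < (p w + ε).re := by
      simpa using add_pos_of_nonneg_of_pos (hre w hw) hε
    have hne {w : ℂ} (hw : w ∈ ball c R) : p w + ε ≠ 0 :=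
      fun h ↦ (hre_pos hw).ne' (by simp [h])
    have h : (R - dist z c) * ‖(p z + ε)⁻¹‖ ≤ (R + dist z c) * ‖(p c + ε)⁻¹‖ :=
      harnack_norm_le_norm_center (p := fun w ↦ (p w + ε)⁻¹)
        ((hp.add_const (ε : ℂ)).inv fun _ ↦ hne)
        (fun w hw ↦ by
          rw [Complex.inv_re]
          exact div_nonneg (hre_pos hw).le (Complex.normSq_nonneg _)) hz
    have hpc := norm_pos_iff.mpr (hne hc)
    have hpz := norm_pos_iff.mpr (hne hz)
    simp only [norm_inv] at h
    field_simp at h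
    linarith
  have h := ContinuousWithinAt.closure_le (x := 0) (by simp [closure_Ioi]) (by fun_prop)
    (by fun_prop) translated
  simpa using h

theorem norm_center_le_two_mul_norm_deriv_of_re_nonneg {p' : ℂ} (hR : 0 < R)
    (hp : DifferentiableOn ℂ p (ball c R)) (hre : ∀ w ∈ ball c R, 0 ≤ (p w).re)
    (hα : α ∈ sphere c R) (hpα : p α = 0) (hp' : HasDerivWithinAt p p' (ball c R) α) :
    ‖p c‖ ≤ 2 * R * ‖p'‖ := by
  let γ : ℝ → ℂ := AffineMap.lineMap α c
  have dist_γ {t : ℝ} (ht : t ∈ Ioo 0 1) : dist (γ t) c = (1 - t) * R := by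
    rw [dist_lineMap_right, Real.norm_of_nonneg (sub_nonneg.mpr ht.2.le), mem_sphere.mp hα]
  have γ_mem : MapsTo γ (Ioo 0 1) (ball c R) := fun t ht ↦ by
    rw [mem_ball, dist_γ ht]
    nlinarith [ht.1]
  have hasDeriv_pγ : HasDerivWithinAt (p ∘ γ) ((c - α) • p') (Ioo 0 1) 0 :=
    hp'.scomp_of_eq 0 AffineMap.hasDerivWithinAt_lineMap γ_mem (by simp [γ])
  have tendsto_slope : Tendsto (slope (p ∘ γ) 0) (𝓝[Ioo 0 1] 0) (𝓝 ((c - α) • p')) :=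
    (hasDerivWithinAt_iff_tendsto_slope' (by simp)).mp hasDeriv_pγ
  have le_slope (t : ℝ) (ht : t ∈ Ioo 0 1) : ‖p c‖ ≤ 2 * ‖slope (p ∘ γ) 0 t‖ := by
    have harnack := harnack_norm_center_le_norm hp hre (γ_mem ht)
    rw [dist_γ ht] at harnack
    have norm_slope : ‖slope (p ∘ γ) 0 t‖ = ‖p (γ t)‖ / t := by
      simp [slope_def_module, γ, hpα, abs_of_pos ht.1, div_eq_inv_mul]
    rw [norm_slope, ← mul_div_assoc, le_div_iff₀ ht.1]
    refine le_of_mul_le_mul_left ?_ hR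
    calc R * (‖p c‖ * t) = (R - (1 - t) * R) * ‖p c‖ := by ring
      _ ≤ (R + (1 - t) * R) * ‖p (γ t)‖ := harnack
      _ ≤ R * (2 * ‖p (γ t)‖) := by nlinarith [mul_nonneg hR.le (norm_nonneg (p (γ t))), ht.1]
  have : (𝓝[Ioo (0 : ℝ) 1] 0).NeBot := left_nhdsWithin_Ioo_neBot one_pos
  calc ‖p c‖ ≤ 2 * ‖(c - α) • p'‖ := ge_of_tendsto (tendsto_slope.norm.const_mul 2)
        (eventually_mem_nhdsWithin.mono le_slope)
    _ = 2 * R * ‖p'‖ := by rw [norm_smul, ← dist_eq_norm, dist_comm, mem_sphere.mp hα, mul_assoc]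

variable {E : Type*} [NormedAddCommGroup E] [NormedSpace ℂ E] {f : ℂ → E} {f' : E}

theorem norm_sub_norm_center_le_two_mul_norm_deriv (hR : 0 < R)
    (hf : DifferentiableOn ℂ f (ball c R)) (hα : α ∈ sphere c R)
    (hmax : ∀ z ∈ ball c R, ‖f z‖ ≤ ‖f α‖) (hf' : HasDerivWithinAt f f' (ball c R) α) :
    ‖f α‖ - ‖f c‖ ≤ 2 * R * ‖f'‖ := by
  obtain ⟨ℓ, hℓ, hℓα⟩ := exists_dual_vector'' ℂ (f α)
  have norm_ℓ_le (x : E) : ‖ℓ x‖ ≤ ‖x‖ := ℓ.le_of_opNorm_le_of_le hℓ le_rfl |>.trans_eq (one_mul _)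
  let p : ℂ → ℂ := fun z ↦ ‖f α‖ - ℓ (f z)
  have hre (z : ℂ) (hz : z ∈ ball c R) : 0 ≤ (p z).re := by
    have : (ℓ (f z)).re ≤ ‖f α‖ := (Complex.re_le_norm _).trans ((norm_ℓ_le _).trans (hmax z hz))
    simpa [p] using this
  have hp : DifferentiableOn ℂ p (ball c R) :=
    (ℓ.differentiable.comp_differentiableOn hf).const_sub _
  have hp' : HasDerivWithinAt p (-ℓ f') (ball c R) α :=
    (ℓ.hasFDerivAt.comp_hasDerivWithinAt α hf').const_sub _
  calc ‖f α‖ - ‖f c‖ ≤ ‖f α‖ - ‖ℓ (f c)‖ := by gcongr; exact norm_ℓ_le _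
    _ ≤ ‖p c‖ := by simpa [p] using norm_sub_norm_le (‖f α‖ : ℂ) (ℓ (f c))
    _ ≤ 2 * R * ‖-ℓ f'‖ :=
      norm_center_le_two_mul_norm_deriv_of_re_nonneg hR hp hre hα (by simp [p, hℓα]) hp'
    _ ≤ 2 * R * ‖f'‖ := by rw [norm_neg]; gcongr; exact norm_ℓ_le _

theorem anti_calculus_max_general [StrictConvexSpace ℝ E] (hf : DifferentiableOn ℂ f (ball c R))
    (hnc : ¬ ∃ y, ∀ z ∈ ball c R, f z = y) (hα : α ∈ sphere c R)
    (hmax : ∀ z ∈ ball c R, ‖f z‖ ≤ ‖f α‖) (hf' : HasDerivWithinAt f f' (ball c R) α) :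
    f' ≠ 0 := by
  rintro rfl
  have hR : 0 < R := by
    by_contra! hR
    exact hnc ⟨0, by simp [ball_eq_empty.mpr hR]⟩
  have max_at_center : ‖f α‖ ≤ ‖f c‖ := by
    simpa using norm_sub_norm_center_le_two_mul_norm_deriv hR hf hα hmax hf'
  exact hnc ⟨f c, Complex.eqOn_of_isPreconnected_of_isMaxOn_norm (convex_ball c R).isPreconnected
    isOpen_ball hf (mem_ball_self hR) fun z hz ↦ (hmax z hz).trans max_at_center⟩

end AntiCalculus

open Metric in
/-- Anti-calculus proposition (maximum case): if `f` is analytic and non-constant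
on an open connected set `Ω` containing the closed disk `D̄(0;R)` and `|f|`
attains its maximum over `D̄(0;R)` at a point `α` with `|α| = R`, then `f'(α) ≠ 0`. -/
theorem anti_calculus_max (R : ℝ) (hR : 0 < R) (Ω : Set ℂ) (hΩ : IsOpen Ω)
    (hconn : IsConnected Ω) (hsub : closedBall (0 : ℂ) R ⊆ Ω)
    (f : ℂ → ℂ) (hf : AnalyticOn ℂ f Ω)
    (hnc : ¬ ∃ c : ℂ, ∀ z ∈ Ω, f z = c)
    (α : ℂ) (hα : ‖α‖ = R)
    (hmax : ∀ z : ℂ, ‖z‖ ≤ R → ‖f z‖ ≤ ‖f α‖) :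
    deriv f α ≠ 0 := by
  have hΩf : AnalyticOnNhd ℂ f Ω := hΩ.analyticOn_iff_analyticOnNhd.mp hf
  exact anti_calculus_max_general
    (hΩf.differentiableOn.mono (ball_subset_closedBall.trans hsub))
    (not_exists_eqOn_const_of_mem_nhds hΩf hconn.isPreconnected hnc
      (hsub (mem_closedBall_self hR.le)) (ball_mem_nhds 0 hR))
    (mem_sphere_zero_iff_norm.mpr hα) (fun z hz ↦ hmax z (mem_ball_zero_iff.mp hz).le)
    (hΩf α (hsub (by simp [hα]))).differentiableAt.hasDerivAt.hasDerivWithinAt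
end

section
/- (Anti-calculus proposition, minimum case) Let R > 0 and let f be analytic on an open set containing the closed disk D̄(0;R) = {z : |z| ≤ R}, with f non-constant on that open connected neighborhood. Suppose α ∈ ℂ with |α| = R is a point of minimum of |f| over D̄(0;R), i.e., |f(α)| ≤ |f(z)| for all z with |z| ≤ R. Then f(α) = 0 or f'(α) ≠ 0. -/
/-!
Near `α` write `f z = f α + (z - α) ^ n * g z` with `g α ≠ 0`. If `f' α = 0` then `n ≥ 2`, so the
power `w ↦ w ^ n` spreads an open half-plane of directions `w` over an angle of at least `2π`. Some
`w` pointing into the disk therefore makes `w ^ n * g α` have negative inner product with `f α`, and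
if `f α ≠ 0` then `‖f‖` strictly decreases along this ray, so that `α` is not a minimum point.
-/

open Filter Topology Metric
open scoped ComplexConjugate

theorem tendsto_add_smul_nhdsGT_zero {E : Type*} [AddCommMonoid E] [Module ℝ E]
    [TopologicalSpace E] [ContinuousAdd E] [ContinuousSMul ℝ E] (a w : E) :
    Tendsto (fun t : ℝ ↦ a + t • w) (𝓝[>] 0) (𝓝 a) :=
  (Continuous.tendsto' (by fun_prop) 0 a (by simp)).mono_left nhdsWithin_le_nhds

section InnerProductSpace

variable {E : Type*} [SeminormedAddCommGroup E] [InnerProductSpace ℝ E]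

theorem eventually_norm_add_smul_lt {ι : Type*} {l : Filter ι} {t : ι → ℝ} {u : ι → E} {a b : E}
    (ht : Tendsto t l (𝓝[>] 0)) (hu : Tendsto u l (𝓝 b)) (hab : inner ℝ a b < 0) :
    ∀ᶠ i in l, ‖a + t i • u i‖ < ‖a‖ := by
  obtain ⟨ht_zero, ht_pos⟩ := tendsto_nhdsWithin_iff.1 ht
  have hlim : Tendsto (fun i ↦ 2 * inner ℝ a (u i) + t i * ‖u i‖ ^ 2) l
      (𝓝 (2 * inner ℝ a b + 0 * ‖b‖ ^ 2)) :=
    ((tendsto_const_nhds.inner hu).const_mul 2).add (ht_zero.mul (hu.norm.pow 2))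
  filter_upwards [ht_pos, hlim.eventually_lt_const (u := 0) (by linarith)] with i hti hneg
  refine lt_of_pow_lt_pow_left₀ 2 (norm_nonneg a) ?_
  calc ‖a + t i • u i‖ ^ 2
      = ‖a‖ ^ 2 + t i * (2 * inner ℝ a (u i) + t i * ‖u i‖ ^ 2) := by
        rw [norm_add_sq_real, inner_smul_right, norm_smul, mul_pow, Real.norm_eq_abs, sq_abs]
        ring
    _ < ‖a‖ ^ 2 := add_lt_of_neg_right _ (mul_neg_of_pos_of_neg hti hneg)

theorem eventually_add_smul_mem_ball {a c w : E} (hw : inner ℝ (a - c) w < 0) :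
    ∀ᶠ t : ℝ in 𝓝[>] 0, a + t • w ∈ ball c (dist a c) := by
  filter_upwards [eventually_norm_add_smul_lt tendsto_id tendsto_const_nhds hw] with t ht
  rwa [mem_ball, dist_eq_norm, dist_eq_norm, add_sub_right_comm]

end InnerProductSpace

section HalfPlane

theorem exists_mem_slitPlane_re_mul_neg {d : ℂ} (hd : d ≠ 0) :
    ∃ e ∈ Complex.slitPlane, (d * e).re < 0 := by
  -- Generically `d * e` can be made a negative real; for `d > 0` that would put `e` on the slit.
  by_cases him : d.im = 0
  · have hre : d.re ≠ 0 := fun h ↦ hd (Complex.ext h him)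
    refine ⟨d * (Complex.I - 1), ?_, ?_⟩
    · simp [Complex.mem_slitPlane_iff, him, hre]
    · have : (d * (d * (Complex.I - 1))).re = -(d.re * d.re) := by simp [him]
      rw [this]
      exact neg_neg_of_pos (mul_self_pos.2 hre)
  · refine ⟨-conj d, by simp [Complex.mem_slitPlane_iff, him], ?_⟩
    rw [mul_neg, Complex.mul_conj, Complex.neg_re, Complex.ofReal_re]
    exact neg_neg_of_pos (Complex.normSq_pos.2 hd)

theorem re_cpow_natCast_inv_pos {e : ℂ} (he : e ∈ Complex.slitPlane) {n : ℕ} (hn : 2 ≤ n) :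
    0 < (e ^ (n⁻¹ : ℂ)).re := by
  obtain ⟨harg_ne, he0⟩ := Complex.mem_slitPlane_iff_arg.1 he
  have hupper : e.arg < Real.pi := (Complex.arg_le_pi e).lt_of_ne harg_ne
  have hlower : -Real.pi < e.arg := Complex.neg_pi_lt_arg e
  have hn' : (2 : ℝ) ≤ n := by exact_mod_cast hn
  have hn0 : (0 : ℝ) < n := by linarith
  have him : (Complex.log e * (n⁻¹ : ℂ)).im = e.arg / n := by
    rw [← div_eq_mul_inv, Complex.div_natCast_im, Complex.log_im]
  rw [Complex.cpow_def_of_ne_zero he0, Complex.exp_re, him]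
  refine mul_pos (Real.exp_pos _) (Real.cos_pos_of_mem_Ioo ⟨?_, ?_⟩)
  · rw [lt_div_iff₀ hn0]
    nlinarith [Real.pi_pos]
  · rw [div_lt_iff₀ hn0]
    nlinarith [Real.pi_pos]

theorem exists_re_pos_and_re_mul_pow_neg {d : ℂ} (hd : d ≠ 0) {n : ℕ} (hn : 2 ≤ n) :
    ∃ v : ℂ, 0 < v.re ∧ (d * v ^ n).re < 0 := by
  obtain ⟨e, he, hde⟩ := exists_mem_slitPlane_re_mul_neg hd
  refine ⟨e ^ (n⁻¹ : ℂ), re_cpow_natCast_inv_pos he hn, ?_⟩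
  rwa [Complex.cpow_nat_inv_pow e (by omega)]

theorem exists_inner_neg_and_inner_pow_mul_neg {ν b c : ℂ} (hν : ν ≠ 0) (hb : b ≠ 0) (hc : c ≠ 0)
    {n : ℕ} (hn : 2 ≤ n) : ∃ w : ℂ, inner ℝ ν w < 0 ∧ inner ℝ b (w ^ n * c) < 0 := by
  -- After the substitution `w = -ν * v`, the half-plane of admissible directions is `0 < v.re`.
  have hd : conj b * c * (-ν) ^ n ≠ 0 := by simp [hν, hb, hc]
  obtain ⟨v, hv, hdv⟩ := exists_re_pos_and_re_mul_pow_neg hd hn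
  refine ⟨-ν * v, ?_, ?_⟩
  · have : inner ℝ ν (-ν * v) = -(Complex.normSq ν * v.re) := by
      rw [Complex.inner, ← Complex.re_ofReal_mul, Complex.normSq_eq_conj_mul_self, ← Complex.neg_re]
      congr 1
      ring
    rw [this]
    exact neg_neg_of_pos (mul_pos (Complex.normSq_pos.2 hν) hv)
  · rw [Complex.inner]
    convert hdv using 2
    ring

end HalfPlane

section Analytic

variable {f : ℂ → ℂ} {α ν : ℂ}

theorem two_le_analyticOrderAt_sub_of_deriv_eq_zero (hf : AnalyticAt ℂ f α) (hd : deriv f α = 0) :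
    2 ≤ analyticOrderAt (f · - f α) α := by
  have hone : 1 ≤ analyticOrderAt (deriv f) α :=
    Order.one_le_iff_ne_zero.2 (analyticOrderAt_ne_zero.2 ⟨hf.deriv, hd⟩)
  calc (2 : ℕ∞) = 1 + 1 := one_add_one_eq_two.symm
    _ ≤ analyticOrderAt (deriv f) α + 1 := by gcongr
    _ = analyticOrderAt (f · - f α) α := hf.analyticOrderAt_deriv_add_one

theorem exists_eventually_eq_add_pow_mul (hf : AnalyticAt ℂ f α)
    (hconst : ¬ EventuallyConst f (𝓝 α)) (hd : deriv f α = 0) :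
    ∃ n ≥ 2, ∃ g : ℂ → ℂ, AnalyticAt ℂ g α ∧ g α ≠ 0 ∧
      ∀ᶠ z in 𝓝 α, f z = f α + (z - α) ^ n * g z := by
  have hfinite : analyticOrderAt (f · - f α) α ≠ ⊤ :=
    mt eventuallyConst_iff_analyticOrderAt_sub_eq_top.2 hconst
  have hsub : AnalyticAt ℂ (f · - f α) α := hf.sub analyticAt_const
  obtain ⟨g, hg, hgα, hfg⟩ := hsub.analyticOrderAt_ne_top.1 hfinite
  refine ⟨analyticOrderNatAt (f · - f α) α, ?_, g, hg, hgα, ?_⟩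
  · have htwo := two_le_analyticOrderAt_sub_of_deriv_eq_zero hf hd
    rw [← Nat.cast_analyticOrderNatAt hfinite] at htwo
    exact_mod_cast htwo
  · filter_upwards [hfg] with z hz using eq_add_of_sub_eq' hz

theorem exists_inner_neg_and_eventually_norm_lt (hf : AnalyticAt ℂ f α)
    (hconst : ¬ EventuallyConst f (𝓝 α)) (hd : deriv f α = 0) (hfα : f α ≠ 0) (hν : ν ≠ 0) :
    ∃ w : ℂ, inner ℝ ν w < 0 ∧ ∀ᶠ t : ℝ in 𝓝[>] 0, ‖f (α + t • w)‖ < ‖f α‖ := by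
  obtain ⟨n, hn, g, hg, hgα, hfg⟩ := exists_eventually_eq_add_pow_mul hf hconst hd
  obtain ⟨w, hνw, hdescent⟩ := exists_inner_neg_and_inner_pow_mul_neg hν hfα hgα hn
  refine ⟨w, hνw, ?_⟩
  have hray := tendsto_add_smul_nhdsGT_zero α w
  have hpow_zero : Tendsto (fun t : ℝ ↦ t ^ n) (𝓝 0) (𝓝 0) :=
    Continuous.tendsto' (by fun_prop) 0 0 (zero_pow (by omega))
  have hpow : Tendsto (fun t : ℝ ↦ t ^ n) (𝓝[>] 0) (𝓝[>] 0) :=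
    tendsto_nhdsWithin_iff.2 ⟨hpow_zero.mono_left nhdsWithin_le_nhds,
      eventually_mem_nhdsWithin.mono fun _ ht ↦ Set.mem_Ioi.2 (pow_pos ht n)⟩
  have hcoeff : Tendsto (fun t : ℝ ↦ w ^ n * g (α + t • w)) (𝓝[>] 0) (𝓝 (w ^ n * g α)) :=
    (hg.continuousAt.tendsto.comp hray).const_mul _
  filter_upwards [hray.eventually hfg, eventually_norm_add_smul_lt hpow hcoeff hdescent]
    with t hexpand hlt
  rwa [hexpand, add_sub_cancel_left, smul_pow, smul_mul_assoc]

theorem anti_calculus_min_general {s : Set ℂ} (hf : AnalyticAt ℂ f α)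
    (hconst : ¬ EventuallyConst f (𝓝 α)) (hν : ν ≠ 0)
    (hs : ∀ w : ℂ, inner ℝ ν w < 0 → ∀ᶠ t : ℝ in 𝓝[>] 0, α + t • w ∈ s)
    (hmin : IsLocalMinOn (‖f ·‖) s α) :
    f α = 0 ∨ deriv f α ≠ 0 := by
  by_contra! ⟨hfα, hd⟩
  obtain ⟨w, hνw, hlt⟩ := exists_inner_neg_and_eventually_norm_lt hf hconst hd hfα hν
  have hray : Tendsto (fun t : ℝ ↦ α + t • w) (𝓝[>] 0) (𝓝[s] α) :=
    tendsto_nhdsWithin_iff.2 ⟨tendsto_add_smul_nhdsGT_zero α w, hs w hνw⟩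
  obtain ⟨t, hlt_t, hle_t⟩ := (hlt.and (hray.eventually hmin)).exists
  exact hlt_t.not_ge hle_t

theorem exists_forall_mem_eq_of_eventuallyConst {U : Set ℂ} (hf : AnalyticOnNhd ℂ f U)
    (hU : IsPreconnected U) (hα : α ∈ U) (hconst : EventuallyConst f (𝓝 α)) :
    ∃ c : ℂ, ∀ z ∈ U, f z = c := by
  obtain ⟨c, hc⟩ := eventuallyConst_iff_exists_eventuallyEq.1 hconst
  exact ⟨c, hf.eqOn_of_preconnected_of_eventuallyEq analyticOnNhd_const hU hα hc⟩

end Analytic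

open Metric in
/-- Anti-calculus proposition (minimum case): if `f` is analytic and non-constant
on an open connected set `Ω` containing the closed disk `D̄(0;R)` and `|f|`
attains its minimum over `D̄(0;R)` at a point `α` with `|α| = R`, then
`f(α) = 0` or `f'(α) ≠ 0`. -/
theorem anti_calculus_min (R : ℝ) (hR : 0 < R) (Ω : Set ℂ) (hΩ : IsOpen Ω)
    (hconn : IsConnected Ω) (hsub : closedBall (0 : ℂ) R ⊆ Ω)
    (f : ℂ → ℂ) (hf : AnalyticOn ℂ f Ω)
    (hnc : ¬ ∃ c : ℂ, ∀ z ∈ Ω, f z = c)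
    (α : ℂ) (hα : ‖α‖ = R)
    (hmin : ∀ z : ℂ, ‖z‖ ≤ R → ‖f α‖ ≤ ‖f z‖) :
    f α = 0 ∨ deriv f α ≠ 0 := by
  have hfΩ : AnalyticOnNhd ℂ f Ω := hΩ.analyticOn_iff_analyticOnNhd.1 hf
  have hαΩ : α ∈ Ω := hsub (by simp [hα])
  have hα0 : α ≠ 0 := norm_pos_iff.1 (hα ▸ hR)
  have hball : IsMinOn (‖f ·‖) (ball 0 (dist α 0)) α := fun z hz ↦
    hmin z (by simpa [hα] using ball_subset_closedBall hz)
  exact anti_calculus_min_general (hfΩ α hαΩ)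
    (mt (exists_forall_mem_eq_of_eventuallyConst hfΩ hconn.isPreconnected hαΩ) hnc) hα0
    (fun w hw ↦ eventually_add_smul_mem_ball (by rwa [sub_zero])) hball.localize
end

section
/- (Bak–Ding–Newman saddle point theorem) Let Ω ⊆ ℂ be open and connected, let f : Ω → ℂ be analytic and non-constant, and let z₀ ∈ Ω. Then z₀ is a saddle point of the real-valued function F(z) = |f(z)| — meaning F is real-differentiable at z₀ with zero (real Fréchet) derivative, and z₀ is neither a local maximum nor a local minimum of F — if and only if f'(z₀) = 0 and f(z₀) ≠ 0. -/
/-!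
A zero of `f` is a minimum of `|f|`. If `f z₀ ≠ 0`, differentiating `|f|²` gives
`|f| d|f| = ⟪f, df⟫` for the real inner product, and a nonzero complex-linear functional `df`
attains the value `f z₀`, so `d|f|` vanishes at `z₀` exactly when `df` does. The maximum modulus
principle, applied to `f` and to `1 / f`, then excludes local extrema.
-/

open Filter Topology

section Real

variable {E F : Type*} [NormedAddCommGroup E] [NormedSpace ℝ E] [NormedAddCommGroup F]

theorem hasFDerivAt_norm_zero_of_hasFDerivAt_zero [NormedSpace ℝ F] {f : E → F} {x : E}
    (hf : HasFDerivAt f (0 : E →L[ℝ] F) x) :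
    HasFDerivAt (fun y => ‖f y‖) (0 : E →L[ℝ] ℝ) x := by
  simp only [hasFDerivAt_iff_isLittleO, zero_apply, sub_zero] at hf ⊢
  exact (Asymptotics.isBigO_of_le _ fun y => abs_norm_sub_norm_le (f y) (f x)).trans_isLittleO hf

theorem norm_mul_fderiv_norm_apply_eq_inner [InnerProductSpace ℝ F] {f : E → F} {x : E}
    {f' : E →L[ℝ] F} {g' : E →L[ℝ] ℝ} (hf : HasFDerivAt f f' x)
    (hg : HasFDerivAt (fun y => ‖f y‖) g' x) (v : E) :
    ‖f x‖ * g' v = inner ℝ (f x) (f' v) := by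
  have hsq : 2 * ‖f x‖ * g' v = 2 * inner ℝ (f x) (f' v) := by
    simpa using DFunLike.congr_fun ((hg.pow 2).unique hf.norm_sq) v
  linarith

theorem eq_zero_of_hasFDerivAt_norm_zero [InnerProductSpace ℝ F] {f : E → F} {x : E}
    {f' : E →L[ℝ] F} (hf : HasFDerivAt f f' x) (hsurj : Function.Surjective f')
    (hnorm : HasFDerivAt (fun y => ‖f y‖) (0 : E →L[ℝ] ℝ) x) : f x = 0 := by
  obtain ⟨v, hv⟩ := hsurj (f x)
  rw [← inner_self_eq_zero (𝕜 := ℝ)]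
  calc inner ℝ (f x) (f x) = inner ℝ (f x) (f' v) := by rw [hv]
    _ = ‖f x‖ * (0 : E →L[ℝ] ℝ) v := (norm_mul_fderiv_norm_apply_eq_inner hf hnorm v).symm
    _ = 0 := mul_zero _

end Real

section RCLike

variable {𝕜 E : Type*} [RCLike 𝕜] [NormedAddCommGroup E] [NormedSpace ℝ E] [NormedSpace 𝕜 E]
  [IsScalarTower ℝ 𝕜 E]

theorem hasFDerivAt_norm_zero_iff {f : E → 𝕜} {f' : E →L[𝕜] 𝕜} {x : E}
    (hf : HasFDerivAt f f' x) (hx : f x ≠ 0) :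
    HasFDerivAt (fun y => ‖f y‖) (0 : E →L[ℝ] ℝ) x ↔ f' = 0 := by
  have hfℝ : HasFDerivAt f (f'.restrictScalars ℝ) x := hf.restrictScalars ℝ
  refine ⟨fun hnorm => ?_, ?_⟩
  · by_contra hf'
    have hsurj : Function.Surjective f' :=
      LinearMap.surjective_of_ne_zero fun h => hf' (ContinuousLinearMap.coe_injective h)
    exact hx (eq_zero_of_hasFDerivAt_norm_zero hfℝ hsurj hnorm)
  · rintro rfl
    exact hasFDerivAt_norm_zero_of_hasFDerivAt_zero hfℝ

end RCLike

theorem fderiv_eq_zero_iff_deriv_eq_zero {𝕜 F : Type*} [NontriviallyNormedField 𝕜]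
    [NormedAddCommGroup F] [NormedSpace 𝕜 F] {f : 𝕜 → F} {x : 𝕜} :
    fderiv 𝕜 f x = 0 ↔ deriv f x = 0 := by
  rw [← norm_eq_zero, ← norm_deriv_eq_norm_fderiv, norm_eq_zero]

theorem not_eventually_eq_of_analyticOnNhd {𝕜 E F : Type*} [NontriviallyNormedField 𝕜]
    [NormedAddCommGroup E] [NormedSpace 𝕜 E] [NormedAddCommGroup F] [NormedSpace 𝕜 F]
    {f : E → F} {U : Set E} (hf : AnalyticOnNhd 𝕜 f U) (hU : IsPreconnected U)
    (hnc : ¬ ∃ c, ∀ z ∈ U, f z = c) {z₀ : E} (hz₀ : z₀ ∈ U) :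
    ¬ ∀ᶠ z in 𝓝 z₀, f z = f z₀ := fun hev =>
  hnc ⟨f z₀, hf.eqOn_of_preconnected_of_eventuallyEq analyticOnNhd_const hU hz₀ hev⟩

theorem bak_ding_newman_saddle_general {E : Type*} [NormedAddCommGroup E] [NormedSpace ℂ E]
    {f : E → ℂ} {z₀ : E} (hf : ∀ᶠ z in 𝓝 z₀, DifferentiableAt ℂ f z)
    (hnc : ¬ ∀ᶠ z in 𝓝 z₀, f z = f z₀) :
    (HasFDerivAt (fun z => ‖f z‖) (0 : E →L[ℝ] ℝ) z₀ ∧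
        ¬ IsLocalMax (fun z => ‖f z‖) z₀ ∧ ¬ IsLocalMin (fun z => ‖f z‖) z₀) ↔
      (fderiv ℂ f z₀ = 0 ∧ f z₀ ≠ 0) := by
  have hderiv : HasFDerivAt f (fderiv ℂ f z₀) z₀ := hf.self_of_nhds.hasFDerivAt
  constructor
  · rintro ⟨hcrit, -, hmin⟩
    have hne : f z₀ ≠ 0 := fun h0 =>
      hmin (Eventually.of_forall fun z => by simp only [h0, norm_zero, norm_nonneg])
    exact ⟨(hasFDerivAt_norm_zero_iff hderiv hne).mp hcrit, hne⟩
  · rintro ⟨hf', hne⟩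
    refine ⟨(hasFDerivAt_norm_zero_iff hderiv hne).mpr hf', fun hmax => ?_, fun hmin => ?_⟩
    · exact hnc (Complex.eventually_eq_of_isLocalMax_norm hf hmax)
    · exact (Complex.eventually_eq_or_eq_zero_of_isLocalMin_norm hf hmin).elim hnc hne

/-- Bak–Ding–Newman saddle point theorem: for `f` analytic and non-constant on an
open connected set `Ω` and `z₀ ∈ Ω`, the point `z₀` is a saddle point of
`F = |f|` (i.e. `F` is real-differentiable at `z₀` with zero Fréchet derivative,
and `z₀` is neither a local maximum nor a local minimum of `F`) if and only if
`f'(z₀) = 0` and `f(z₀) ≠ 0`. -/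
theorem bak_ding_newman_saddle (Ω : Set ℂ) (hΩ : IsOpen Ω) (hconn : IsConnected Ω)
    (f : ℂ → ℂ) (hf : AnalyticOn ℂ f Ω)
    (hnc : ¬ ∃ c : ℂ, ∀ z ∈ Ω, f z = c)
    (z₀ : ℂ) (hz₀ : z₀ ∈ Ω) :
    (HasFDerivAt (fun z : ℂ => ‖f z‖) (0 : ℂ →L[ℝ] ℝ) z₀ ∧
        ¬ IsLocalMax (fun z : ℂ => ‖f z‖) z₀ ∧
        ¬ IsLocalMin (fun z : ℂ => ‖f z‖) z₀) ↔
      (deriv f z₀ = 0 ∧ f z₀ ≠ 0) := by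
  have hfΩ : AnalyticOnNhd ℂ f Ω := hΩ.analyticOn_iff_analyticOnNhd.mp hf
  simpa only [fderiv_eq_zero_iff_deriv_eq_zero] using bak_ding_newman_saddle_general
    (hf.differentiableOn.eventually_differentiableAt (hΩ.mem_nhds hz₀))
    (not_eventually_eq_of_analyticOnNhd hfΩ hconn.isPreconnected hnc hz₀)
end

section
/- (Discrete Cauchy integral formula for polynomials) Let P be a complex polynomial, let n ≥ 1 be a natural number with n ≥ deg P, and let ω = e^{iπ/n}. Then for every z₀ ∈ ℂ, every z ∈ ℂ with z ≠ 0, and every j ∈ {0, 1, …, n}: P^{(j)}(z₀)/j! = (1/(2n)) ∑_{k=0}^{2n−1} P(ζ_k)/(ζ_k − z₀)^j, where ζ_k = z₀ + z ω^k. -/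
/-!
Summing the Taylor expansion `P (z₀ + x) = ∑ᵢ cᵢ xⁱ`, divided by `x ^ j`, over the points
`x = z ω ^ k` of a regular `m`-gon kills every `cᵢ` with `i ≢ j` modulo `m`, by orthogonality of the
characters `k ↦ ω ^ (k l)`. If `j < m` and `deg P < m + j`, the only surviving coefficient is
`cⱼ`, which is the `j`-th Hasse derivative of `P` at `z₀`.
-/

section

open Polynomial Finset

variable {K : Type*} [Field K]

section PrimitiveRoot

variable {ω : K} {m : ℕ}

lemma sum_pow_zpow_eq_ite_dvd (hω : IsPrimitiveRoot ω m) (l : ℤ) :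
    ∑ k ∈ range m, (ω ^ k) ^ l = if (m : ℤ) ∣ l then (m : K) else 0 := by
  have hcomm (k : ℕ) : (ω ^ k) ^ l = (ω ^ l) ^ k := by
    rw [← zpow_natCast, ← zpow_natCast, zpow_comm]
  split_ifs with hl <;> rw [← hω.zpow_eq_one_iff_dvd] at hl
  · simp [hcomm, hl]
  · have hpow : (ω ^ l) ^ m = 1 := by rw [← hcomm, hω.pow_eq_one, one_zpow]
    rw [sum_congr rfl fun k _ ↦ hcomm k, geom_sum_eq hl, hpow, sub_self, zero_div]

lemma sum_eval_mul_pow_div_pow (hω : IsPrimitiveRoot ω m) (z : K) (f : K[X]) (j : ℕ) :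
    ∑ k ∈ range m, f.eval (z * ω ^ k) / (z * ω ^ k) ^ j =
      m * ∑ i ∈ f.support with j ≡ i [MOD m], f.coeff i * (z ^ i / z ^ j) := by
  have hterm : ∀ k ∈ range m, f.eval (z * ω ^ k) / (z * ω ^ k) ^ j =
      ∑ i ∈ f.support, f.coeff i * (z ^ i / z ^ j) * (ω ^ k) ^ ((i : ℤ) - j) := by
    intro k hk
    have hω0 : ω ≠ 0 := hω.ne_zero (Nat.ne_zero_of_lt (mem_range.mp hk))
    rw [eval_eq_sum, Polynomial.sum, sum_div]
    refine sum_congr rfl fun i _ ↦ ?_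
    rw [zpow_sub₀ (pow_ne_zero k hω0), zpow_natCast, zpow_natCast, mul_pow, mul_pow, mul_div_assoc,
      mul_div_mul_comm, mul_assoc]
  calc ∑ k ∈ range m, f.eval (z * ω ^ k) / (z * ω ^ k) ^ j
      = ∑ i ∈ f.support, f.coeff i * (z ^ i / z ^ j) *
          ∑ k ∈ range m, (ω ^ k) ^ ((i : ℤ) - j) := by
        simp only [sum_congr rfl hterm, mul_sum]
        exact sum_comm
    _ = m * ∑ i ∈ f.support with j ≡ i [MOD m], f.coeff i * (z ^ i / z ^ j) := by
        rw [mul_comm, sum_mul, sum_filter]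
        simp only [sum_pow_zpow_eq_ite_dvd hω, ← Nat.modEq_iff_dvd, mul_ite, mul_zero]

lemma sum_eval_mul_pow_div_pow_eq_coeff (hω : IsPrimitiveRoot ω m) {z : K} (hz : z ≠ 0) {f : K[X]}
    {j : ℕ} (hj : j < m) (hf : f.natDegree < m + j) :
    ∑ k ∈ range m, f.eval (z * ω ^ k) / (z * ω ^ k) ^ j = m * f.coeff j := by
  rw [sum_eval_mul_pow_div_pow hω, sum_eq_single j]
  · rw [div_self (pow_ne_zero j hz), mul_one]
  · intro i hi hij
    rw [mem_filter] at hi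
    have hi_lt : i < m + j := (le_natDegree_of_mem_supp i hi.1).trans_lt hf
    exact absurd (hi.2.eq_of_abs_lt (abs_lt.mpr ⟨by lia, by lia⟩)).symm hij
  · intro hj_notMem
    have hcoeff : f.coeff j = 0 := by simpa [Nat.ModEq.refl] using hj_notMem
    rw [hcoeff, zero_mul]

theorem discrete_cauchy_formula_general (hω : IsPrimitiveRoot ω m) {P : K[X]} {j : ℕ} (hj : j < m)
    (hdeg : P.natDegree < m + j) (z₀ : K) {z : K} (hz : z ≠ 0) :
    (hasseDeriv j P).eval z₀ =
      (1 / (m : K)) *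
        ∑ k ∈ range m, P.eval (z₀ + z * ω ^ k) / ((z₀ + z * ω ^ k) - z₀) ^ j := by
  have : NeZero m := ⟨Nat.ne_zero_of_lt hj⟩
  have hm : (m : K) ≠ 0 := hω.neZero'.out
  have hsum := sum_eval_mul_pow_div_pow_eq_coeff hω hz hj (f := taylor z₀ P)
    (by rwa [natDegree_taylor])
  simp only [taylor_eval, taylor_coeff, add_comm _ z₀] at hsum
  simp only [add_sub_cancel_left, hsum]
  field_simp

end PrimitiveRoot

lemma eval_iterate_derivative_div_factorial [CharZero K] (P : K[X]) (j : ℕ) (x : K) :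
    (derivative^[j] P).eval x / (j.factorial : K) = (hasseDeriv j P).eval x := by
  rw [div_eq_iff (Nat.cast_ne_zero.mpr j.factorial_ne_zero), ← factorial_smul_hasseDeriv,
    LinearMap.smul_apply, eval_smul, nsmul_eq_mul, mul_comm]

lemma isPrimitiveRoot_exp_pi_mul_I_div {n : ℕ} (hn : n ≠ 0) :
    IsPrimitiveRoot (Complex.exp (Real.pi * Complex.I / n)) (2 * n) := by
  convert Complex.isPrimitiveRoot_exp (2 * n) (by lia) using 2
  push_cast
  field_simp

end

/-- Discrete Cauchy integral formula for polynomials: if `n ≥ 1`, `n ≥ deg P`,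
`ω = e^{iπ/n}`, `z ≠ 0`, and `j ≤ n`, then with `ζ_k = z₀ + z ωᵏ`,
`P⁽ʲ⁾(z₀)/j! = (1/(2n)) ∑_{k=0}^{2n-1} P(ζ_k)/(ζ_k - z₀)^j`. -/
theorem discrete_cauchy_formula (P : Polynomial ℂ) (n : ℕ) (hn : 1 ≤ n)
    (hdeg : P.natDegree ≤ n) (ω : ℂ) (hω : ω = Complex.exp (Real.pi * Complex.I / n)) :
    ∀ z₀ z : ℂ, z ≠ 0 → ∀ j : ℕ, j ≤ n →
      ((Polynomial.derivative^[j] P).eval z₀) / (Nat.factorial j : ℂ) =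
        (1 / (2 * n : ℂ)) *
          ∑ k ∈ Finset.range (2 * n),
            P.eval (z₀ + z * ω ^ k) / ((z₀ + z * ω ^ k) - z₀) ^ j := by
  intro z₀ z hz j hj
  have hprim : IsPrimitiveRoot ω (2 * n) := hω ▸ isPrimitiveRoot_exp_pi_mul_I_div (by lia)
  rw [eval_iterate_derivative_div_factorial]
  exact_mod_cast discrete_cauchy_formula_general hprim (by lia) (by lia) z₀ hz
end

section
/- (Hurwitz; Read; Connell–Porcelli) Let f be analytic on the open unit disk D(0;1) = {z ∈ ℂ : |z| < 1}, i.e., around every point of D(0;1) it is given by a convergent power series. Then there exists a sequence a : ℕ → ℂ such that for every z with |z| < 1 the series ∑_{n=0}^∞ a_n z^n converges to f(z). -/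
theorem analytic_eq_power_series_on_unit_disk_general {E : Type*} [NormedAddCommGroup E]
    [NormedSpace ℂ E] [CompleteSpace E] {f : ℂ → E} {c : ℂ} {r : ENNReal}
    (hf : DifferentiableOn ℂ f (Metric.eball c r)) :
    ∃ a : ℕ → E, ∀ z ∈ Metric.eball c r, HasSum (fun n : ℕ => (z - c) ^ n • a n) (f z) := by
  refine ⟨fun n => (n.factorial : ℂ)⁻¹ • iteratedDeriv n f c, fun z hz => ?_⟩
  simpa only [smul_comm ((z - c) ^ _)] using Complex.hasSum_taylorSeries_on_eball hf hz

open Metric in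
/-- Hurwitz; Read; Connell–Porcelli: a function analytic on the open unit disk
is represented there by a single power series centered at `0`. -/
theorem analytic_eq_power_series_on_unit_disk (f : ℂ → ℂ)
    (hf : AnalyticOn ℂ f (ball (0 : ℂ) 1)) :
    ∃ a : ℕ → ℂ, ∀ z : ℂ, ‖z‖ < 1 → HasSum (fun n : ℕ => a n * z ^ n) (f z) := by
  have hd : DifferentiableOn ℂ f (eball 0 1) := by
    simpa only [← eball_ofReal, ENNReal.ofReal_one] using hf.differentiableOn
  simpa [← ofReal_norm, mul_comm] using analytic_eq_power_series_on_unit_disk_general hd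
end

section
/- (Clunie–Jack lemma) Let f be analytic on an open set containing the closed unit disk D̄(0;1), non-constant on D̄(0;1), and satisfying |f(z)| ≤ 1 for all |z| ≤ 1. Suppose α ∈ ℂ with |α| = 1 is a point of maximum of |f| over D̄(0;1), i.e., |f(z)| ≤ |f(α)| for all |z| ≤ 1. Then the complex number α f'(α)/f(α) is a real number and is strictly positive. If moreover f(0) = 0, then α f'(α)/f(α) is a real number greater than or equal to 1. -/
/-!
Normalise `f` by `g = f / f α`, so that `g` maps the disk `|z| < R` into the unit disk and
`g α = 1`; the quantity of interest is then `α g'(α)`. It is real because `Re g` is maximal at `α`: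
every inward direction `v` gives `Re (g'(α) v) ≤ 0`. Its size comes from the growth bound
`|g(rα)| ≤ (|g(0)| + r) / (1 + |g(0)| r)`, a consequence of the Schwarz–Pick lemma. Both sides
equal `1` at `r = 1`, so comparing the derivatives there gives
`Re (α g'(α)) ≥ (1 - |g(0)|) / (1 + |g(0)|)`, which is positive when `|g(0)| < 1` and is `1` when
`g(0) = 0`.
-/

open Metric Set
open scoped ComplexConjugate ComplexOrder

lemma norm_one_sub_conj_mul_sq (a w : ℂ) :
    ‖1 - conj a * w‖ ^ 2 = ‖w - a‖ ^ 2 + (1 - ‖a‖ ^ 2) * (1 - ‖w‖ ^ 2) := by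
  simp only [Complex.sq_norm, Complex.normSq_sub, Complex.normSq_conj, map_one, one_mul, map_mul,
    Complex.conj_conj, mul_comm w]
  simp only [Complex.mul_re, Complex.conj_re, Complex.conj_im]
  ring

lemma one_sub_conj_mul_ne_zero {a w : ℂ} (ha : ‖a‖ < 1) (hw : ‖w‖ ≤ 1) :
    1 - conj a * w ≠ 0 := by
  refine sub_ne_zero.2 fun h => ?_
  have hlt : ‖conj a * w‖ < 1 := by
    rw [norm_mul, RCLike.norm_conj]
    exact mul_lt_one_of_nonneg_of_lt_one_left (norm_nonneg a) ha hw
  simp [← h] at hlt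

lemma norm_sub_div_one_sub_conj_mul_le_one {a w : ℂ} (ha : ‖a‖ ≤ 1) (hw : ‖w‖ ≤ 1) :
    ‖(w - a) / (1 - conj a * w)‖ ≤ 1 := by
  rw [norm_div]
  refine div_le_one_of_le₀ ((sq_le_sq₀ (norm_nonneg _) (norm_nonneg _)).1 ?_) (norm_nonneg _)
  rw [norm_one_sub_conj_mul_sq]
  have ha' : 0 ≤ 1 - ‖a‖ ^ 2 := sub_nonneg.2 (pow_le_one₀ (norm_nonneg a) ha)
  have hw' : 0 ≤ 1 - ‖w‖ ^ 2 := sub_nonneg.2 (pow_le_one₀ (norm_nonneg w) hw)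
  linarith [mul_nonneg ha' hw']

lemma norm_le_of_norm_sub_le_mul_norm_one_sub_conj_mul {a w : ℂ} {t : ℝ} (ha : ‖a‖ ≤ 1)
    (hw : ‖w‖ ≤ 1) (ht₀ : 0 ≤ t) (ht₁ : t ≤ 1) (h : ‖w - a‖ ≤ t * ‖1 - conj a * w‖) :
    ‖w‖ ≤ (‖a‖ + t) / (1 + ‖a‖ * t) := by
  have hden : 1 - ‖a‖ * ‖w‖ ≤ ‖1 - conj a * w‖ := by
    simpa using norm_sub_norm_le 1 (conj a * w)
  have haw : 0 ≤ 1 - ‖a‖ * ‖w‖ := sub_nonneg.2 (mul_le_one₀ ha (norm_nonneg w) hw)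
  have hsq : ‖w - a‖ ^ 2 ≤ t ^ 2 * ‖1 - conj a * w‖ ^ 2 := by
    simpa only [mul_pow] using pow_le_pow_left₀ (norm_nonneg _) h 2
  have ht : 0 ≤ 1 - t ^ 2 := sub_nonneg.2 (pow_le_one₀ ht₀ ht₁)
  have hreal : (‖w‖ - ‖a‖) ^ 2 ≤ (t * (1 - ‖a‖ * ‖w‖)) ^ 2 := by
    have hmul := mul_le_mul_of_nonneg_left (pow_le_pow_left₀ haw hden 2) ht
    have hid := norm_one_sub_conj_mul_sq a w
    linear_combination hmul + hsq + hid
  have hlin : ‖w‖ - ‖a‖ ≤ t * (1 - ‖a‖ * ‖w‖) := abs_le_of_sq_le_sq' hreal (by positivity) |>.2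
  rw [le_div_iff₀ (by positivity)]
  linarith

section SchwarzPick

variable {E : Type*} [NormedAddCommGroup E] [NormedSpace ℂ E] {f : E → ℂ} {c z : E} {R : ℝ}

/-- The **Schwarz–Pick lemma** based at the centre of the ball. -/
lemma norm_sub_le_mul_norm_one_sub_conj_mul (hf : DifferentiableOn ℂ f (ball c R))
    (hmaps : MapsTo f (ball c R) (closedBall 0 1)) (hfc : ‖f c‖ < 1) (hz : z ∈ ball c R) :
    ‖f z - f c‖ ≤ dist z c / R * ‖1 - conj (f c) * f z‖ := by
  have hle : ∀ x ∈ ball c R, ‖f x‖ ≤ 1 := fun x hx => mem_closedBall_zero_iff.1 (hmaps hx)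
  have hne : ∀ x ∈ ball c R, 1 - conj (f c) * f x ≠ 0 := fun x hx =>
    one_sub_conj_mul_ne_zero hfc (hle x hx)
  let φ : E → ℂ := fun x => (f x - f c) / (1 - conj (f c) * f x)
  have hφ : DifferentiableOn ℂ φ (ball c R) :=
    by
    simp only [φ, div_eq_mul_inv]
    exact (hf.sub_const _).mul (((hf.const_mul _).const_sub 1).fun_inv hne)
  have hφc : φ c = 0 := by simp [φ]
  have hφmaps : MapsTo φ (ball c R) (closedBall (φ c) 1) := fun x hx => by
    rw [hφc, mem_closedBall_zero_iff]
    exact norm_sub_div_one_sub_conj_mul_le_one hfc.le (hle x hx)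
  have hschwarz := Complex.dist_le_div_mul_dist_of_mapsTo_ball hφ hφmaps hz
  rwa [hφc, dist_zero_right, norm_div, one_div_mul_eq_div,
    div_le_iff₀ (norm_pos_iff.2 (hne z hz))] at hschwarz

lemma norm_le_add_div_one_add_mul_of_mapsTo_ball (hf : DifferentiableOn ℂ f (ball c R))
    (hmaps : MapsTo f (ball c R) (closedBall 0 1)) (hz : z ∈ ball c R) :
    ‖f z‖ ≤ (‖f c‖ + dist z c / R) / (1 + ‖f c‖ * (dist z c / R)) := by
  have hR : 0 < R := nonempty_ball.1 ⟨z, hz⟩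
  have hle : ∀ x ∈ ball c R, ‖f x‖ ≤ 1 := fun x hx => mem_closedBall_zero_iff.1 (hmaps hx)
  have ht : dist z c / R ≤ 1 := div_le_one_of_le₀ (mem_ball.1 hz).le hR.le
  rcases (hle c (mem_ball_self hR)).lt_or_eq with hfc | hfc
  · exact norm_le_of_norm_sub_le_mul_norm_one_sub_conj_mul hfc.le (hle z hz) (by positivity) ht
      (norm_sub_le_mul_norm_one_sub_conj_mul hf hmaps hfc hz)
  · rw [hfc, one_mul, div_self (by positivity)]
    exact hle z hz

end SchwarzPick

lemma norm_lt_of_isPreconnected_of_not_const {E F : Type*} [NormedAddCommGroup E]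
    [NormedSpace ℂ E] [NormedAddCommGroup F] [NormedSpace ℂ F] [StrictConvexSpace ℝ F]
    {f : E → F} {U : Set E} {M : ℝ} {z : E} (hU : IsPreconnected U) (hUo : IsOpen U)
    (hf : DifferentiableOn ℂ f U) (hM : ∀ x ∈ U, ‖f x‖ ≤ M) (hnc : ¬ ∃ c, ∀ x ∈ U, f x = c)
    (hz : z ∈ U) : ‖f z‖ < M := by
  refine (hM z hz).lt_of_ne fun hzM => hnc ⟨f z, ?_⟩
  exact Complex.eqOn_of_isPreconnected_of_isMaxOn_norm hU hUo hf hz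
    fun x hx => (hM x hx).trans hzM.ge

section BoundaryDerivative

variable {g : ℂ → ℂ} {α c : ℂ}

lemma re_mul_sub_nonpos_of_isLocalMaxOn_re {s : Set ℂ} {y : ℂ} (hg : HasDerivWithinAt g c s α)
    (hmax : IsLocalMaxOn (fun z => (g z).re) s α) (hy : openSegment ℝ α y ⊆ s) :
    (c * (y - α)).re ≤ 0 := by
  have hre := Complex.reCLM.hasFDerivAt.comp_hasFDerivWithinAt α hg.complexToReal_fderiv
  simpa using hmax.hasFDerivWithinAt_nonpos hre (sub_mem_posTangentConeAt_of_openSegment_subset hy)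

lemma mul_deriv_nonneg_of_isLocalMaxOn_re (hg : HasDerivWithinAt g c (ball 0 ‖α‖) α)
    (hmax : IsLocalMaxOn (fun z => (g z).re) (ball 0 ‖α‖) α) : 0 ≤ α * c := by
  rcases eq_or_ne c 0 with rfl | hc
  · simp
  -- Among the points of the closed disk, `y` maximises `Re (c * y)`, with value `‖α * c‖`.
  set y : ℂ := ‖α‖ * (conj c / ‖c‖)
  have hy : ‖y‖ = ‖α‖ := by simp [y, hc]
  have hcy : c * y = ‖α * c‖ := by
    have hc' : (‖c‖ : ℂ) ≠ 0 := by simpa using hc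
    simp only [y, norm_mul, Complex.ofReal_mul]
    field_simp
    rw [mul_right_comm, Complex.mul_conj', mul_comm]
  have hre : (c * (y - α)).re ≤ 0 := by
    rcases eq_or_ne α y with hαy | hαy
    · simp [← hαy]
    refine re_mul_sub_nonpos_of_isLocalMaxOn_re hg hmax ?_
    rw [← interior_closedBall' (0 : ℂ) ‖α‖]
    exact (strictConvex_closedBall ℝ (0 : ℂ) ‖α‖).openSegment_subset (by simp) (by simp [hy]) hαy
  refine Complex.re_eq_norm.1 (le_antisymm (Complex.re_le_norm _) ?_)
  simpa [mul_sub, hcy, mul_comm c α] using hre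

lemma deriv_nonneg_of_forall_Ioo_le {u : ℝ → ℝ} {u' a b : ℝ} (hab : a < b)
    (hu : HasDerivWithinAt u u' (Ioo a b) b) (hmax : ∀ r ∈ Ioo a b, u r ≤ u b) : 0 ≤ u' := by
  have hcone : a - b ∈ posTangentConeAt (Ioo a b) b :=
    sub_mem_posTangentConeAt_of_openSegment_subset (by
      rw [openSegment_symm, openSegment_eq_Ioo hab])
  have hloc : IsLocalMaxOn u (Ioo a b) b := eventually_mem_nhdsWithin.mono hmax
  have hnonpos : (a - b) * u' ≤ 0 := by
    simpa using hloc.hasFDerivWithinAt_nonpos hu.hasFDerivWithinAt hcone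
  exact nonneg_of_mul_nonpos_right hnonpos (sub_neg.2 hab)

/-- The **boundary Schwarz lemma** of Osserman. -/
lemma one_sub_div_one_add_le_re_mul_deriv (hα : α ≠ 0)
    (hg : DifferentiableOn ℂ g (ball 0 ‖α‖)) (hmaps : MapsTo g (ball 0 ‖α‖) (closedBall 0 1))
    (hgα : g α = 1) (hc : HasDerivWithinAt g c (ball 0 ‖α‖) α) :
    (1 - ‖g 0‖) / (1 + ‖g 0‖) ≤ (α * c).re := by
  have hα' : 0 < ‖α‖ := norm_pos_iff.2 hα
  have hmem : MapsTo (fun r : ℝ => (r : ℂ) * α) (Ioo 0 1) (ball 0 ‖α‖) := fun r hr => by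
    simpa [abs_of_pos hr.1] using mul_lt_of_lt_one_left hα' hr.2
  have hgrowth : ∀ r ∈ Ioo (0 : ℝ) 1, (g (r * α)).re * (1 + ‖g 0‖ * r) - (‖g 0‖ + r) ≤ 0 := by
    intro r hr
    have hr₀ : 0 ≤ r := hr.1.le
    have hbound := norm_le_add_div_one_add_mul_of_mapsTo_ball hg hmaps (hmem hr)
    rw [dist_zero_right, norm_mul, Complex.norm_of_nonneg hr₀, mul_div_cancel_right₀ r hα'.ne',
      le_div_iff₀ (by positivity)] at hbound
    have hle := mul_le_mul_of_nonneg_right (Complex.re_le_norm (g (r * α)))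
      (show 0 ≤ 1 + ‖g 0‖ * r by positivity)
    exact sub_nonpos.2 (hle.trans hbound)
  have hray : HasDerivWithinAt (fun r : ℝ => (r : ℂ) * α) α (Ioo 0 1) 1 := by
    simpa using (Complex.ofRealCLM.hasDerivWithinAt (x := 1)).mul_const α
  have hre : HasDerivWithinAt (fun r : ℝ => (g (r * α)).re) (α * c).re (Ioo 0 1) 1 :=
    Complex.reCLM.hasFDerivAt.comp_hasDerivWithinAt (1 : ℝ)
      (hc.scomp_of_eq 1 hray hmem (by simp))
  have hderiv := (hre.mul (((hasDerivWithinAt_id 1 _).const_mul ‖g 0‖).const_add 1)).sub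
    ((hasDerivWithinAt_id 1 _).const_add ‖g 0‖)
  have hnonneg := deriv_nonneg_of_forall_Ioo_le one_pos hderiv fun r hr => by
    simpa [hgα, add_comm] using hgrowth r hr
  rw [div_le_iff₀ (by positivity)]
  simp only [id, Complex.ofReal_one, one_mul, mul_one, hgα, Complex.one_re] at hnonneg
  linarith

end BoundaryDerivative

theorem clunie_jack_general {f : ℂ → ℂ} {α f' : ℂ} {R : ℝ} (hα : ‖α‖ = R)
    (hf : DifferentiableOn ℂ f (ball 0 R)) (hf' : HasDerivWithinAt f f' (ball 0 R) α)
    (hnc : ¬ ∃ c : ℂ, ∀ z ∈ ball 0 R, f z = c) (hmax : ∀ z ∈ ball 0 R, ‖f z‖ ≤ ‖f α‖) :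
    ((α * f' / f α).im = 0 ∧ 0 < (α * f' / f α).re) ∧
      (f 0 = 0 → 1 ≤ (α * f' / f α).re) := by
  subst hα
  have hα₀ : α ≠ 0 := by
    rintro rfl
    exact hnc ⟨0, by simp⟩
  have h₀ : ‖f 0‖ < ‖f α‖ :=
    norm_lt_of_isPreconnected_of_not_const (convex_ball 0 _).isPreconnected isOpen_ball hf hmax hnc
      (by simpa using hα₀)
  have hfα : 0 < ‖f α‖ := (norm_nonneg _).trans_lt h₀
  have hgα : f α / f α = 1 := div_self (norm_pos_iff.1 hfα)
  have hle : ∀ z ∈ ball 0 ‖α‖, ‖f z / f α‖ ≤ 1 := fun z hz => by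
    rw [norm_div]
    exact div_le_one_of_le₀ (hmax z hz) hfα.le
  have hreal : 0 ≤ α * (f' / f α) := by
    refine mul_deriv_nonneg_of_isLocalMaxOn_re (hf'.div_const _) ?_
    refine eventually_mem_nhdsWithin.mono fun z hz => ?_
    simpa only [hgα, Complex.one_re] using (Complex.re_le_norm _).trans (hle z hz)
  have hbound : (1 - ‖f 0 / f α‖) / (1 + ‖f 0 / f α‖) ≤ (α * (f' / f α)).re :=
    one_sub_div_one_add_le_re_mul_deriv hα₀ (hf.div_const _)
      (fun z hz => mem_closedBall_zero_iff.2 (hle z hz)) hgα (hf'.div_const _)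
  rw [mul_div_assoc]
  refine ⟨⟨(Complex.nonneg_iff.1 hreal).2.symm, lt_of_lt_of_le ?_ hbound⟩, fun hf₀ => ?_⟩
  · have hlt : ‖f 0 / f α‖ < 1 := by rwa [norm_div, div_lt_one hfα]
    exact div_pos (sub_pos.2 hlt) (by positivity)
  · simpa [hf₀] using hbound

open Metric in
/-- Clunie–Jack lemma: let `f` be analytic on an open set containing the closed
unit disk, non-constant on the closed unit disk, with `‖f‖ ≤ 1` there, and let
`α` with `‖α‖ = 1` be a maximum point of `‖f‖` over the closed disk. Then
`α f'(α)/f(α)` is a strictly positive real number; if moreover `f 0 = 0`, it is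
a real number `≥ 1`. -/
theorem clunie_jack (Ω : Set ℂ) (hΩ : IsOpen Ω) (hsub : closedBall (0 : ℂ) 1 ⊆ Ω)
    (f : ℂ → ℂ) (hf : AnalyticOn ℂ f Ω)
    (hnc : ¬ ∃ c : ℂ, ∀ z ∈ closedBall (0 : ℂ) 1, f z = c)
    (hb : ∀ z : ℂ, ‖z‖ ≤ 1 → ‖f z‖ ≤ 1)
    (α : ℂ) (hα : ‖α‖ = 1)
    (hmax : ∀ z : ℂ, ‖z‖ ≤ 1 → ‖f z‖ ≤ ‖f α‖) :
    ((α * deriv f α / f α).im = 0 ∧ 0 < (α * deriv f α / f α).re) ∧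
      (f 0 = 0 → 1 ≤ (α * deriv f α / f α).re) := by
  have hdiff : ∀ z ∈ closedBall (0 : ℂ) 1, DifferentiableAt ℂ f z := fun z hz =>
    hf.differentiableOn.differentiableAt (hΩ.mem_nhds (hsub hz))
  have hcont : ContinuousOn f (closedBall 0 1) := fun z hz =>
    (hdiff z hz).continuousAt.continuousWithinAt
  have hnc' : ¬ ∃ c : ℂ, ∀ z ∈ ball 0 1, f z = c := fun ⟨c, hc⟩ =>
    hnc ⟨c, EqOn.of_subset_closure hc hcont continuousOn_const ball_subset_closedBall
      (closure_ball 0 one_ne_zero).ge⟩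
  exact clunie_jack_general hα
    (fun z hz => (hdiff z (ball_subset_closedBall hz)).differentiableWithinAt)
    (hdiff α (by simp [hα])).hasDerivAt.hasDerivWithinAt hnc'
    (fun z hz => hmax z (mem_ball_zero_iff.1 hz).le)
end

section
/- (Gutzmer–Parseval inequality for Laurent series) Let 0 ≤ r₁ < r₂ ≤ ∞, let a : ℤ → ℂ, and let f be defined on the annulus {z : r₁ < |z| < r₂} by f(z) = ∑_{j=−∞}^{+∞} a_j z^j, where for each such z both the series ∑_{n=0}^∞ a_n z^n and ∑_{m=1}^∞ a_{−m} z^{−m} converge and their sum is f(z). Let r satisfy r₁ < r < r₂ and let M be a real number with |f(z)| ≤ M for all z with |z| = r. Then ∑_{j=−∞}^{+∞} |a_j|² r^{2j} ≤ M² (the sum over all integers j, with r^{2j} the integer power of r). -/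
/-!
On the circle of radius `r` the Laurent series becomes the Fourier series
`∑ a_j r^j e^{ijθ}` of `θ ↦ f (r e^{iθ})`. A family in `ℂ` is summable only if it is absolutely
summable, so convergence at the single point `r` already gives `∑ |a_j| r^j < ∞` and the Fourier
series converges uniformly, hence in `L²`. As the exponentials are orthonormal, Parseval's identity
`∑ |a_j|² r^{2j} = (2π)⁻¹ ∫ |f (r e^{iθ})|² dθ` follows, and the right-hand side is at most `M²`.
-/

open AddCircle MeasureTheory Metric
open scoped Real

theorem hasSum_sq_norm_of_orthonormal {ι 𝕜 E : Type*} [RCLike 𝕜] [SeminormedAddCommGroup E]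
    [InnerProductSpace 𝕜 E] {v : ι → E} (hv : Orthonormal 𝕜 v) {c : ι → 𝕜} {x : E}
    (hx : HasSum (fun i ↦ c i • v i) x) : HasSum (fun i ↦ ‖c i‖ ^ 2) (‖x‖ ^ 2) := by
  have norm_sq_sum (s : Finset ι) : ‖∑ i ∈ s, c i • v i‖ ^ 2 = ∑ i ∈ s, ‖c i‖ ^ 2 := by
    simpa using hv.orthogonalFamily.norm_sum c s
  simpa only [HasSum, norm_sq_sum] using hx.norm.pow 2

theorem sq_norm_toLp_two {α 𝕜 : Type*} [TopologicalSpace α] [CompactSpace α] [MeasurableSpace α]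
    [BorelSpace α] [RCLike 𝕜] (μ : Measure α) [IsFiniteMeasure μ] (g : C(α, 𝕜)) :
    ‖ContinuousMap.toLp (E := 𝕜) 2 μ 𝕜 g‖ ^ 2 = ∫ x, ‖g x‖ ^ 2 ∂μ := by
  have inner_self := ContinuousMap.inner_toLp (𝕜 := 𝕜) μ g g
  simp only [inner_self_eq_norm_sq_to_K, RCLike.mul_conj] at inner_self
  exact_mod_cast inner_self

theorem hasSum_sq_norm_of_hasSum_fourier {T : ℝ} [Fact (0 < T)] {c : ℤ → ℂ}
    {g : C(AddCircle T, ℂ)} (hg : HasSum (fun j ↦ c j • fourier j) g) :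
    HasSum (fun j ↦ ‖c j‖ ^ 2) (∫ t, ‖g t‖ ^ 2 ∂haarAddCircle) := by
  rw [← sq_norm_toLp_two]
  refine hasSum_sq_norm_of_orthonormal orthonormal_fourier ?_
  simpa using (ContinuousMap.toLp (E := ℂ) 2 haarAddCircle ℂ).hasSum hg

theorem summable_smul_fourier {T : ℝ} [Fact (0 < T)] {c : ℤ → ℂ} (hc : Summable c) :
    Summable fun j ↦ c j • (fourier j : C(AddCircle T, ℂ)) := by
  refine .of_norm ?_
  simpa only [norm_smul, fourier_norm, mul_one] using hc.norm

theorem circleMap_zero_zpow_eq_mul_fourier (r θ : ℝ) (j : ℤ) :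
    circleMap 0 r θ ^ j = (r : ℂ) ^ j * fourier j (θ : AddCircle (2 * π)) := by
  rw [circleMap_zero_zpow, circleMap_zero, fourier_coe_apply]
  push_cast
  congr 2
  field_simp

theorem integral_haarAddCircle_eq_circleAverage {E : Type*} [NormedAddCommGroup E]
    [NormedSpace ℝ E] [Fact (0 < 2 * π)] {g : AddCircle (2 * π) → E} {f : ℂ → E} {c : ℂ} {r : ℝ}
    (hgf : ∀ θ : ℝ, g θ = f (circleMap c r θ)) :
    ∫ t, g t ∂haarAddCircle = Real.circleAverage f c r := by
  rw [integral_haarAddCircle, ← AddCircle.intervalIntegral_preimage (2 * π) 0, zero_add,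
    Real.circleAverage]
  simp only [hgf]

section LaurentSeries

local instance fact_two_pi_pos : Fact (0 < 2 * π) := ⟨Real.two_pi_pos⟩

variable {a : ℤ → ℂ} {f : ℂ → ℂ} {r : ℝ}

theorem exists_hasSum_fourier_of_hasSum_zpow
    (hf : ∀ z ∈ sphere (0 : ℂ) |r|, HasSum (fun j ↦ a j * z ^ j) (f z)) :
    ∃ g : C(AddCircle (2 * π), ℂ), HasSum (fun j ↦ (a j * (r : ℂ) ^ j) • fourier j) g ∧
      ∀ θ : ℝ, g θ = f (circleMap 0 r θ) := by
  have summable_coeff : Summable fun j ↦ a j * (r : ℂ) ^ j := (hf r (by simp)).summable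
  obtain ⟨g, hg⟩ := summable_smul_fourier (T := 2 * π) summable_coeff
  refine ⟨g, hg, fun θ ↦ ?_⟩
  have hasSum_g := (ContinuousMap.evalCLM ℂ (θ : AddCircle (2 * π))).hasSum hg
  refine hasSum_g.unique ?_
  simpa [circleMap_zero_zpow_eq_mul_fourier, mul_assoc] using hf _ (circleMap_mem_sphere' 0 r θ)

theorem circleIntegrable_sq_norm_of_hasSum_zpow
    (hf : ∀ z ∈ sphere (0 : ℂ) |r|, HasSum (fun j ↦ a j * z ^ j) (f z)) :
    CircleIntegrable (fun z ↦ ‖f z‖ ^ 2) 0 r := by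
  obtain ⟨g, -, hgf⟩ := exists_hasSum_fourier_of_hasSum_zpow hf
  simp only [CircleIntegrable, ← hgf]
  exact Continuous.intervalIntegrable (by fun_prop) _ _

theorem hasSum_sq_norm_circleAverage_of_hasSum_zpow
    (hf : ∀ z ∈ sphere (0 : ℂ) |r|, HasSum (fun j ↦ a j * z ^ j) (f z)) :
    HasSum (fun j ↦ ‖a j‖ ^ 2 * r ^ (2 * j)) (Real.circleAverage (fun z ↦ ‖f z‖ ^ 2) 0 r) := by
  obtain ⟨g, hg, hgf⟩ := exists_hasSum_fourier_of_hasSum_zpow hf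
  have sq_norm_coeff (j : ℤ) : ‖a j * (r : ℂ) ^ j‖ ^ 2 = ‖a j‖ ^ 2 * r ^ (2 * j) := by
    rw [norm_mul, mul_pow, ← Complex.ofReal_zpow, Complex.norm_real, Real.norm_eq_abs, sq_abs,
      mul_comm 2 j, zpow_mul, zpow_ofNat]
  rw [← integral_haarAddCircle_eq_circleAverage (g := fun t ↦ ‖g t‖ ^ 2) (by simp [hgf])]
  simpa only [sq_norm_coeff] using hasSum_sq_norm_of_hasSum_fourier hg

end LaurentSeries

theorem gutzmer_parseval_laurent_general {a : ℤ → ℂ} {f : ℂ → ℂ} {r : ℝ} (hr : 0 < r)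
    (hf : ∀ z : ℂ, ‖z‖ = r → HasSum (fun j : ℤ ↦ a j * z ^ j) (f z))
    {M : ℝ} (hM : ∀ z : ℂ, ‖z‖ = r → ‖f z‖ ≤ M) :
    Summable (fun j : ℤ ↦ ‖a j‖ ^ 2 * r ^ (2 * j)) ∧
      ∑' j : ℤ, ‖a j‖ ^ 2 * r ^ (2 * j) ≤ M ^ 2 := by
  have norm_eq {z : ℂ} (hz : z ∈ sphere 0 |r|) : ‖z‖ = r := by simpa [abs_of_pos hr] using hz
  have hasSum_on_sphere : ∀ z ∈ sphere (0 : ℂ) |r|, HasSum (fun j ↦ a j * z ^ j) (f z) :=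
    fun z hz ↦ hf z (norm_eq hz)
  have parseval := hasSum_sq_norm_circleAverage_of_hasSum_zpow hasSum_on_sphere
  refine ⟨parseval.summable, parseval.tsum_eq.trans_le ?_⟩
  refine Real.circleAverage_mono_on_of_le_circle
    (circleIntegrable_sq_norm_of_hasSum_zpow hasSum_on_sphere) fun z hz ↦ ?_
  exact pow_le_pow_left₀ (norm_nonneg _) (hM z (norm_eq hz)) 2

/-- Gutzmer–Parseval inequality for Laurent series: let `0 ≤ r₁ < r₂ ≤ ∞` and
let `f(z) = ∑_{j ∈ ℤ} a_j z^j` on the annulus `{z : r₁ < ‖z‖ < r₂}`. If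
`r₁ < r < r₂` and `‖f(z)‖ ≤ M` on the circle `‖z‖ = r`, then
`∑_{j ∈ ℤ} ‖a_j‖² r^{2j} ≤ M²`. -/
theorem gutzmer_parseval_laurent (r₁ r₂ : ENNReal) (h12 : r₁ < r₂)
    (a : ℤ → ℂ) (f : ℂ → ℂ)
    (hf : ∀ z : ℂ, r₁ < ‖z‖₊ → (‖z‖₊ : ENNReal) < r₂ →
      HasSum (fun j : ℤ => a j * z ^ j) (f z))
    (r : ℝ) (hr1 : r₁ < ENNReal.ofReal r) (hr2 : ENNReal.ofReal r < r₂)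
    (M : ℝ) (hM : ∀ z : ℂ, ‖z‖ = r → ‖f z‖ ≤ M) :
    ∑' j : ℤ, ‖a j‖ ^ 2 * r ^ (2 * j) ≤ M ^ 2 := by
  refine (gutzmer_parseval_laurent_general (ENNReal.ofReal_pos.1 hr1.pos) ?_ hM).2
  rintro z rfl
  rw [ofReal_norm] at hr1 hr2
  exact hf z hr1 hr2
end
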